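/- Let X be a topological space and let κ be an uncountable cardinal such that X has a base for its topology of cardinality at most κ. If the product of κ copies of X (with the product topology) is normal, then X is either vacuously normal or compact. -/

import Mathlib

/-!
Noble's theorem on normal powers, without separation axioms and for a single exponent.

Suppose `X` has two disjoint nonempty closed sets. Urysohn's lemma in `X^ι` gives a continuous
`f : X → ℝ` with `f p = 0` and `f q = 1`, so the two-point set `{p, q}` behaves like a copy of `2`
inside `X` even though it need not be closed or discrete. Normality descends along continuous maps
`Z → Y → W` whose composite is a closed embedding (`normalSpace_of_factorization`), and this makes
`X × 2^ι` normal (`normalSpace_prod_cantor`).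

Let `V : ι → Set X` be an open cover. In `X × 2^ι` the closed sets
`{(x, J) | {a | x ∈ V a} ⊆ J}` and `X × {∅}` are disjoint; let `g` be a Urysohn function for them.
As `2^ι` is compact, `g` curries to a continuous map `Φ` from `X` to the metric space `C(2^ι, ℝ)`.
Continuity of `g (y, ·)` at `∅` shows that the `Φ`-preimage of a ball of radius `1/3` about `Φ y`
is covered by finitely many `V a`. If finitely many such balls cover `X`, then `V` has a finite
subcover. Otherwise there is a sequence in `X` whose image under `Φ` is `1/3`-separated, so `ℕ → X`
followed by `Φ` is a closed embedding; then `ℕ^ι` is normal along with `X^ι`, against A. H. Stone's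
theorem that `ℕ^ι` is not normal for uncountable `ι` (`not_normalSpace_pi_nat`).

The bound on the weight is what allows covers to be indexed by `ι`.
-/

universe u

/-- A space is vacuously normal if it contains no pair of disjoint
nonempty closed subsets. -/
def VacuouslyNormal (X : Type*) [TopologicalSpace X] : Prop :=
  ∀ F H : Set X, IsClosed F → IsClosed H → F.Nonempty → H.Nonempty → ¬ Disjoint F H

open Set Topology

theorem normalSpace_of_factorization {Z Y W : Type*} [TopologicalSpace Z] [TopologicalSpace Y]
    [TopologicalSpace W] [NormalSpace Y] {i : Z → Y} {r : Y → W} (hi : Continuous i)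
    (hr : Continuous r) (h : IsClosedEmbedding (r ∘ i)) : NormalSpace Z := by
  refine ⟨fun s t hs ht hst => ?_⟩
  have hd : Disjoint (r ⁻¹' ((r ∘ i) '' s)) (r ⁻¹' ((r ∘ i) '' t)) :=
    ((disjoint_image_iff h.injective).2 hst).preimage r
  obtain ⟨U, V, hU, hV, hsU, htV, hUV⟩ := normal_separation
    ((h.isClosedMap s hs).preimage hr) ((h.isClosedMap t ht).preimage hr) hd
  exact ⟨i ⁻¹' U, i ⁻¹' V, hU.preimage hi, hV.preimage hi,
    fun z hz => hsU (mem_image_of_mem _ hz), fun z hz => htV (mem_image_of_mem _ hz),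
    hUV.preimage i⟩

/-- The points of `ι → ℕ` that take each value other than `k` at most once. -/
def injectiveOff (ι : Type*) (k : ℕ) : Set (ι → ℕ) :=
  {x | ∀ a b, a ≠ b → x a = x b → x a = k}

theorem isClosed_injectiveOff (ι : Type*) (k : ℕ) : IsClosed (injectiveOff ι k) := by
  simp only [injectiveOff, ofPred_forall]
  refine isClosed_iInter fun a => isClosed_iInter fun b => isClosed_iInter fun _ => ?_
  have h : Continuous fun x : ι → ℕ => (x a, x b) := by fun_prop
  exact (isClosed_discrete {p : ℕ × ℕ | p.1 = p.2 → p.1 = k}).preimage h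

/-- A finitely supported point of `injectiveOff ι 0` can be extended to one whose support contains
a prescribed finite set, by giving fresh labels to the new coordinates. -/
theorem exists_extension {ι : Type*} (x : ι → ℕ) (hx : x ∈ injectiveOff ι 0)
    (hfin : (Function.support x).Finite) (T : Finset ι) :
    ∃ x' ∈ injectiveOff ι 0, (Function.support x').Finite ∧ (∀ a, x a ≠ 0 → x' a = x a) ∧
      ∀ a ∈ T, x' a ≠ 0 := by
  classical
  obtain ⟨e, he⟩ := Set.countable_iff_exists_injOn.1 T.countable_toSet
  obtain ⟨N, hN⟩ := (hfin.image x).bddAbove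
  have hN' : ∀ a, x a ≤ N := fun a => by
    by_cases h : x a = 0
    · omega
    · exact hN (mem_image_of_mem x h)
  refine ⟨fun a => if x a ≠ 0 then x a else if a ∈ T then e a + N + 1 else 0, ?_, ?_, ?_, ?_⟩
  · intro a b hab h
    have h1 := hx a b hab
    have h2 := hN' a
    have h3 := hN' b
    have h4 : a ∈ T → b ∈ T → e a ≠ e b := fun ha hb hh => hab (he ha hb hh)
    dsimp only at h ⊢
    split_ifs at h ⊢ <;> first | omega | (exfalso; apply h4 <;> first | assumption | omega)
  · refine (hfin.union T.finite_toSet).subset fun a ha => ?_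
    by_contra hcon
    simp only [mem_union, Function.mem_support, not_or, not_not, Finset.mem_coe] at hcon
    simp [hcon.1, hcon.2] at ha
  · intro a ha
    simp [ha]
  · intro a ha
    dsimp only
    split_ifs <;> omega

/-- A. H. Stone's theorem. The closed sets `injectiveOff ι 0` and `injectiveOff ι 1` are disjoint
since `ι` does not inject into `ℕ`, and have no disjoint open neighbourhoods. -/
theorem not_normalSpace_pi_nat {ι : Type*} [Uncountable ι] : ¬ NormalSpace (ι → ℕ) := by
  classical
  intro hnorm
  have hdisj : Disjoint (injectiveOff ι 0) (injectiveOff ι 1) := by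
    refine Set.disjoint_left.2 fun x h0 h1 => ?_
    have hinj : Function.Injective x := fun a b hab => by
      by_contra hne
      have := h0 a b hne hab
      have := h1 a b hne hab
      omega
    exact not_countable (α := ι) hinj.countable
  obtain ⟨U, V, hU, hV, h0U, h1V, hUV⟩ := normal_separation
    (isClosed_injectiveOff ι 0) (isClosed_injectiveOff ι 1) hdisj
  have cyl : ∀ O : Set (ι → ℕ), IsOpen O → ∀ x ∈ O, ∃ T : Finset ι,
      ∀ z : ι → ℕ, (∀ a ∈ T, z a = x a) → z ∈ O := fun O hO x hx => by
    obtain ⟨T, u, hu, hsub⟩ := isOpen_pi_iff.1 hO x hx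
    exact ⟨T, fun z hz => hsub fun a ha => by rw [hz a ha]; exact (hu a ha).2⟩
  choose! cU hcU using cyl U hU
  let P := {x : ι → ℕ // x ∈ injectiveOff ι 0 ∧ (Function.support x).Finite}
  -- Each step labels all coordinates on which membership of the previous point in `U` depends.
  have step : ∀ x : P, ∃ x' : P, (∀ a, x.1 a ≠ 0 → x'.1 a = x.1 a) ∧
      ∀ a ∈ cU x.1, x'.1 a ≠ 0 := fun x => by
    obtain ⟨x', h1, h2, h3, h4⟩ := exists_extension x.1 x.2.1 x.2.2 (cU x.1)
    exact ⟨⟨x', h1, h2⟩, h3, h4⟩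
  choose next hnext1 hnext2 using step
  let x : ℕ → P := fun n => Nat.rec ⟨fun _ => 0, by simp [injectiveOff], by simp⟩
    (fun _ p => next p) n
  have hxs : ∀ n, x (n + 1) = next (x n) := fun n => rfl
  have hmono : ∀ m n, m ≤ n → ∀ a, (x m).1 a ≠ 0 → (x n).1 a = (x m).1 a := by
    intro m n hmn a ha
    induction n, hmn using Nat.le_induction with
    | base => rfl
    | succ n _ ih => rw [hxs, hnext1 _ _ (by rw [ih]; exact ha), ih]
  -- The limit of the sequence, filled up with the value `1`, lies in `injectiveOff ι 1`.
  let y : ι → ℕ := fun a => if h : ∃ n, (x n).1 a ≠ 0 then (x h.choose).1 a else 1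
  have hy : ∀ n a, (x n).1 a ≠ 0 → y a = (x n).1 a := by
    intro n a ha
    have h : ∃ n, (x n).1 a ≠ 0 := ⟨n, ha⟩
    have e1 := hmono _ _ (le_max_left n h.choose) a ha
    have e2 := hmono _ _ (le_max_right n h.choose) a h.choose_spec
    simp only [y, dif_pos h]
    rw [← e1, e2]
  have hy1 : ∀ a, (¬ ∃ n, (x n).1 a ≠ 0) → y a = 1 := fun a h => by simp only [y, dif_neg h]
  have hyV : y ∈ V := by
    refine h1V fun a b hab h => ?_
    by_cases ha : ∃ n, (x n).1 a ≠ 0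
    · by_cases hb : ∃ n, (x n).1 b ≠ 0
      · exfalso
        obtain ⟨m, hm⟩ := ha
        obtain ⟨n, hn⟩ := hb
        have e1 := hmono _ _ (le_max_left m n) a hm
        have e2 := hmono _ _ (le_max_right m n) b hn
        have := (x (max m n)).2.1 a b hab (by rw [e1, e2, ← hy m a hm, ← hy n b hn, h])
        omega
      · rw [h, hy1 b hb]
    · exact hy1 a ha
  obtain ⟨T, hT⟩ := cyl V hV y hyV
  have hlab : ∃ n, ∀ a ∈ T, (∃ k, (x k).1 a ≠ 0) → (x n).1 a ≠ 0 := by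
    have : ∀ a, ∃ k, (∃ k, (x k).1 a ≠ 0) → (x k).1 a ≠ 0 := fun a => by
      by_cases h : ∃ k, (x k).1 a ≠ 0
      · exact ⟨h.choose, fun _ => h.choose_spec⟩
      · exact ⟨0, fun h' => absurd h' h⟩
    choose k hk using this
    refine ⟨T.sup k, fun a ha h => ?_⟩
    rw [hmono _ _ (Finset.le_sup ha) a (hk a h)]
    exact hk a h
  obtain ⟨n, hn⟩ := hlab
  -- `z` agrees with `x n` where `U` can see it and with `y` where `V` can see it.
  let z : ι → ℕ := fun a => if a ∈ cU (x n).1 then (x n).1 a else y a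
  refine (Set.disjoint_left.1 hUV : ∀ ⦃w⦄, w ∈ U → w ∉ V) (?_ : z ∈ U) ?_
  · exact hcU _ (h0U (x n).2.1) z fun a ha => by simp only [z, if_pos ha]
  · refine hT z fun a ha => ?_
    by_cases h : a ∈ cU (x n).1
    · have h' : (x (n + 1)).1 a ≠ 0 := hnext2 _ a h
      simp only [z, if_pos h]
      exact (hy n a (hn a ha ⟨n + 1, h'⟩)).symm
    · simp only [z, if_neg h]

/-- The reindexing `ι ≃ Option ι` makes room for the extra factor `X`; the section `2 → {p, q}` of
`f` plays the role of an embedding `2^ι → X^ι`. -/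
theorem normalSpace_prod_cantor {X ι : Type*} [TopologicalSpace X] [Infinite ι]
    [NormalSpace (ι → X)] (f : C(X, ℝ)) {p q : X} (hp : f p = 0) (hq : f q = 1) :
    NormalSpace (X × (ι → Bool)) := by
  have hcard : Cardinal.mk (Option ι) = Cardinal.mk ι := by
    rw [Cardinal.mk_option, Cardinal.add_one_eq (Cardinal.aleph0_le_mk ι)]
  obtain ⟨σ⟩ := Cardinal.eq.1 hcard
  let c : Bool → X := fun b => if b then q else p
  let i : X × (ι → Bool) → ι → X := fun w j => (σ.symm j).elim w.1 fun a => c (w.2 a)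
  let r : (ι → X) → X × (ι → ℝ) := fun y => (y (σ none), fun a => f (y (σ (some a))))
  have hi : Continuous i := by
    refine continuous_pi fun j => ?_
    cases h : σ.symm j with
    | none => simpa only [i, h, Option.elim] using continuous_fst
    | some a =>
      simp only [i, h, Option.elim]
      exact (continuous_of_discreteTopology (f := c)).comp
        ((continuous_apply a).comp continuous_snd)
  have hr : Continuous r := by
    simp only [r]
    fun_prop
  refine normalSpace_of_factorization hi hr ?_
  have hfc : IsClosedEmbedding (f ∘ c) := by
    refine (continuous_of_discreteTopology).isClosedEmbedding ?_
    intro a b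
    cases a <;> cases b <;> simp [c, hp, hq]
  have key : r ∘ i = Prod.map id (Pi.map fun _ : ι => f ∘ c) := by
    funext w
    refine Prod.ext ?_ ?_
    · simp [r, i]
    · funext a
      simp [r, i, Pi.map]
  rw [key]
  exact IsClosedEmbedding.id.prodMap (IsClosedEmbedding.piMap fun _ => hfc)

/-- The Tamano–Morita argument: normality of `X × 2^ι` provides, for each open cover indexed by
`ι`, a map to a metric space which is fine enough for the cover. -/
theorem exists_finite_subcover {X ι : Type*} [TopologicalSpace X] [Uncountable ι]
    [NormalSpace (ι → X)] [NormalSpace (X × (ι → Bool))] (V : ι → Set X)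
    (hV : ∀ a, IsOpen (V a)) (hcov : ∀ x, ∃ a, x ∈ V a) :
    ∃ S : Finset ι, ∀ x, ∃ a ∈ S, x ∈ V a := by
  classical
  let A : Set (X × (ι → Bool)) := {w | ∀ a, w.1 ∈ V a → w.2 a = true}
  let B : Set (X × (ι → Bool)) := {w | w.2 = fun _ => false}
  have hA : IsClosed A := by
    have : A = ⋂ a, {w : X × (ι → Bool) | w.1 ∈ V a → w.2 a = true} := by
      ext w; simp [A]
    rw [this]
    refine isClosed_iInter fun a => isClosed_imp ((hV a).preimage continuous_fst) ?_
    exact isClosed_eq ((continuous_apply a).comp continuous_snd) continuous_const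
  have hB : IsClosed B := isClosed_eq continuous_snd continuous_const
  have hAB : Disjoint A B := by
    refine Set.disjoint_left.2 fun w hwA hwB => ?_
    obtain ⟨a, ha⟩ := hcov w.1
    have h1 : w.2 a = true := hwA a ha
    have h2 : w.2 = fun _ => false := hwB
    simp [h2] at h1
  obtain ⟨g, hg0, hg1, -⟩ := exists_continuous_zero_one_of_isClosed hA hB hAB
  let Φ : C(X, C(ι → Bool, ℝ)) := g.curry
  have hloc : ∀ y : X, ∃ I : Finset ι, ∀ t : ι → Bool, (∀ a ∈ I, t a = false) →
      2 / 3 < g (y, t) := fun y => by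
    have hopen : IsOpen {t : ι → Bool | 2 / 3 < g (y, t)} :=
      isOpen_lt continuous_const (by fun_prop)
    have h1 : g (y, fun _ => false) = 1 := hg1 (show (y, fun _ => false) ∈ B from rfl)
    obtain ⟨I, u, hu, hsub⟩ := isOpen_pi_iff.1 hopen (fun _ => false)
      (by rw [mem_ofPred_eq, h1]; norm_num)
    exact ⟨I, fun t ht => hsub fun a ha => by rw [ht a ha]; exact (hu a ha).2⟩
  choose I hI using hloc
  have hball : ∀ x y, dist (Φ y) (Φ x) < 1 / 3 → ∃ a ∈ I y, x ∈ V a := by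
    intro x y hxy
    by_contra! hcon
    let t : ι → Bool := fun a => decide (x ∈ V a)
    have h0 : g (x, t) = 0 := hg0 (show (x, t) ∈ A from fun a ha => by simpa [t] using ha)
    have h1 := hI y t fun a ha => by simpa [t] using hcon a ha
    have h2 : dist (g (y, t)) (g (x, t)) ≤ dist (Φ y) (Φ x) :=
      ContinuousMap.dist_apply_le_dist (f := Φ y) (g := Φ x) t
    rw [h0, Real.dist_eq, sub_zero] at h2
    linarith [le_abs_self (g (y, t))]
  by_cases htb : ∃ s : Finset X, ∀ x, ∃ y ∈ s, dist (Φ y) (Φ x) < 1 / 3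
  · obtain ⟨s, hs⟩ := htb
    refine ⟨s.biUnion I, fun x => ?_⟩
    obtain ⟨y, hy, hd⟩ := hs x
    obtain ⟨a, ha, hxa⟩ := hball x y hd
    exact ⟨a, Finset.mem_biUnion.2 ⟨y, hy, ha⟩, hxa⟩
  · exfalso
    push Not at htb
    have : Std.Symm fun x y : X => 1 / 3 ≤ dist (Φ x) (Φ y) :=
      ⟨fun x y h => by rwa [dist_comm]⟩
    obtain ⟨u, -, hu⟩ := exists_seq_of_forall_finset_exists' (fun _ : X => True)
      (fun x y => 1 / 3 ≤ dist (Φ x) (Φ y)) fun s _ => by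
        obtain ⟨y, hy⟩ := htb s
        exact ⟨y, trivial, hy⟩
    have hemb : IsClosedEmbedding (Φ ∘ u) :=
      Metric.isClosedEmbedding_of_pairwise_le_dist (ε := 1 / 3) (by norm_num) hu
    refine not_normalSpace_pi_nat (ι := ι) ?_
    exact normalSpace_of_factorization
      (i := Pi.map fun _ : ι => u) (r := Pi.map fun _ : ι => (Φ : X → C(ι → Bool, ℝ)))
      (Continuous.piMap fun _ => continuous_of_discreteTopology)
      (Continuous.piMap fun _ => Φ.continuous)
      (IsClosedEmbedding.piMap fun _ : ι => hemb)

theorem vacuouslyNormal_or_compact_of_normal_power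
    (X : Type u) [TopologicalSpace X] (ι : Type u)
    (huncountable : Cardinal.aleph0 < Cardinal.mk ι)
    (hweight : ∃ B : Set (Set X), TopologicalSpace.IsTopologicalBasis B ∧
      Cardinal.mk B ≤ Cardinal.mk ι)
    (hnorm : NormalSpace (ι → X)) :
    VacuouslyNormal X ∨ CompactSpace X := by
  classical
  refine or_iff_not_imp_left.2 fun hX => ?_
  have : Uncountable ι := Cardinal.aleph0_lt_mk_iff.1 huncountable
  have : Infinite ι := inferInstance
  simp only [VacuouslyNormal] at hX
  push Not at hX
  obtain ⟨F, H, hF, hH, ⟨p, hp⟩, ⟨q, hq⟩, hFH⟩ := hX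
  obtain ⟨i₀⟩ : Nonempty ι := inferInstance
  obtain ⟨g, hg0, hg1, -⟩ := exists_continuous_zero_one_of_isClosed
    (hF.preimage (continuous_apply (A := fun _ : ι => X) i₀)) (hH.preimage (continuous_apply i₀))
    (hFH.preimage _)
  let f : C(X, ℝ) := ⟨fun x => g fun _ => x, by fun_prop⟩
  have hprod : NormalSpace (X × (ι → Bool)) :=
    normalSpace_prod_cantor f (p := p) (q := q) (hg0 hp) (hg1 hq)
  obtain ⟨B, hB, hcard⟩ := hweight
  obtain ⟨e⟩ := Cardinal.le_def _ _ |>.1 hcard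
  refine ⟨isCompact_of_finite_subcover fun {K} U hU hcov => ?_⟩
  -- The basic open sets inside some `U k`, indexed by `ι` through `e`, refine the cover `U`.
  let V : ι → Set X := fun a => ⋃ b : B, ⋃ _ : e b = a ∧ ∃ k, b.1 ⊆ U k, b.1
  have hVU : ∀ a, (V a).Nonempty → ∃ k, V a ⊆ U k := by
    rintro a ⟨x, hx⟩
    simp only [V, mem_iUnion] at hx
    obtain ⟨b, ⟨hba, k, hk⟩, -⟩ := hx
    refine ⟨k, fun z hz => ?_⟩
    simp only [V, mem_iUnion] at hz
    obtain ⟨b', ⟨hb', -⟩, hz⟩ := hz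
    have : b' = b := e.injective (hb'.trans hba.symm)
    exact hk (this ▸ hz)
  obtain ⟨S, hS⟩ := exists_finite_subcover V
    (fun a => isOpen_iUnion fun b => isOpen_iUnion fun _ => hB.isOpen b.2) fun x => by
      obtain ⟨k, hk⟩ := mem_iUnion.1 (hcov (mem_univ x))
      obtain ⟨b, hb, hxb, hbk⟩ := hB.exists_subset_of_mem_open hk (hU k)
      refine ⟨e ⟨b, hb⟩, ?_⟩
      simp only [V, mem_iUnion]
      exact ⟨⟨b, hb⟩, ⟨rfl, k, hbk⟩, hxb⟩
  have hch : ∀ a, ∃ k : Option K, (V a).Nonempty → ∃ k' ∈ k, V a ⊆ U k' := fun a => by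
    by_cases h : (V a).Nonempty
    · obtain ⟨k, hk⟩ := hVU a h
      exact ⟨some k, fun _ => ⟨k, rfl, hk⟩⟩
    · exact ⟨none, fun h' => absurd h' h⟩
  choose k hk using hch
  refine ⟨S.biUnion fun a => (k a).toFinset, fun x _ => ?_⟩
  obtain ⟨a, ha, hxa⟩ := hS x
  obtain ⟨k', hk', hsub⟩ := hk a ⟨x, hxa⟩
  simp only [mem_iUnion]
  exact ⟨k', Finset.mem_biUnion.2 ⟨a, ha, by simpa using hk'⟩, hsub hxa⟩
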